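/- Let X and Y be finite-dimensional Banach spaces and let G ∈ L(X,Y) with ‖G‖ = 1. Define C̃ := { ψ_{x,y*} ∈ L(X,Y)* : x ∈ S_X, y* ∈ S_{Y*}, ‖Gx‖ = 1 }. Then the set { φ ∈ L(X,Y)* : |φ(T)| ≤ ‖T‖_G for all T ∈ L(X,Y) } (i.e., the unit ball of the dual of (L(X,Y), ‖·‖_G)) equals the convex hull of C̃. -/

import Mathlib

open Filter Topology

variable {𝕜 : Type*} [RCLike 𝕜]

/-- The `G`-norm of an operator `T`:
`‖T‖_G := inf_{δ>0} sup {‖Tx‖ : x ∈ S_X, ‖Gx‖ > 1 - δ}`. -/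
noncomputable def Gnorm {X Y : Type*} [NormedAddCommGroup X] [NormedSpace 𝕜 X]
    [NormedAddCommGroup Y] [NormedSpace 𝕜 Y] (G T : X →L[𝕜] Y) : ℝ :=
  ⨅ δ : {δ : ℝ // 0 < δ},
    sSup {r : ℝ | ∃ x : X, ‖x‖ = 1 ∧ 1 - (δ : ℝ) < ‖G x‖ ∧ r = ‖T x‖}

/-- `C̃ := { ψ_{x, y*} = y* ⊗ x : x ∈ S_X, y* ∈ S_{Y*}, ‖Gx‖ = 1 }`, where
`ψ_{x,y*}(S) = y*(Sx)`. -/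
def Ctilde {X Y : Type*} [NormedAddCommGroup X] [NormedSpace 𝕜 X]
    [NormedAddCommGroup Y] [NormedSpace 𝕜 Y] (G : X →L[𝕜] Y) :
    Set ((X →L[𝕜] Y) →L[𝕜] 𝕜) :=
  {ψ | ∃ (x : X) (f : Y →L[𝕜] 𝕜), ‖x‖ = 1 ∧ ‖f‖ = 1 ∧ ‖G x‖ = 1 ∧
    ∀ S : X →L[𝕜] Y, ψ S = f (S x)}

/-!
By compactness of the unit sphere, `‖T‖_G` is the maximum of `‖T x‖` over the unit vectors `x`
with `‖G x‖ = 1`; a Hahn-Banach functional norming `T x` then makes it the maximum of `re (ψ T)`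
over `ψ ∈ C̃`. Since `C̃` is compact and the space is finite-dimensional, Carathéodory's theorem
makes its convex hull compact, in particular closed. A functional outside the hull would
therefore be separated from it by an evaluation at some operator `T`, contradicting the bound by
`‖T‖_G`.
-/

section ConvexHull

theorem convexHull_eq_biUnion_image_stdSimplex (R : Type*) {E : Type*} [Field R] [LinearOrder R]
    [IsStrictOrderedRing R] [AddCommGroup E] [Module R E] [FiniteDimensional R E] (s : Set E) :
    convexHull R s = ⋃ n ∈ Finset.range (Module.finrank R E + 2),
      (fun p : (Fin n → R) × (Fin n → E) ↦ ∑ i, p.1 i • p.2 i) ''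
        (stdSimplex R (Fin n) ×ˢ Set.univ.pi fun _ ↦ s) := by
  refine Set.Subset.antisymm (fun x hx ↦ ?_) (Set.iUnion₂_subset fun n _ ↦ ?_)
  · obtain ⟨ι, _, z, w, hzs, hz, hw_pos, hw_sum, hwz⟩ := eq_pos_convex_span_of_mem_convexHull hx
    have card_le : Fintype.card ι ≤ Module.finrank R E + 1 :=
      hz.card_le_finrank_succ.trans (Nat.succ_le_succ (Submodule.finrank_le _))
    let e := (Fintype.equivFin ι).symm
    refine Set.mem_biUnion (Finset.mem_range.2 (Nat.lt_succ_of_le card_le)) ⟨(w ∘ e, z ∘ e), ?_, ?_⟩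
    · exact ⟨⟨fun i ↦ (hw_pos (e i)).le, (e.sum_comp w).trans hw_sum⟩,
        fun i _ ↦ hzs (Set.mem_range_self (e i))⟩
    · exact (e.sum_comp fun i ↦ w i • z i).trans hwz
  · rintro _ ⟨⟨w, z⟩, ⟨⟨hw_nonneg, hw_sum⟩, hz⟩, rfl⟩
    exact (convex_convexHull R s).sum_mem (fun i _ ↦ hw_nonneg i) hw_sum
      fun i _ ↦ subset_convexHull R s (hz i (Set.mem_univ i))

theorem isCompact_convexHull_of_finiteDimensional {E : Type*} [AddCommGroup E] [Module ℝ E]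
    [TopologicalSpace E] [ContinuousAdd E] [ContinuousSMul ℝ E] [FiniteDimensional ℝ E]
    {s : Set E} (hs : IsCompact s) : IsCompact (convexHull ℝ s) := by
  rw [convexHull_eq_biUnion_image_stdSimplex]
  exact (Finset.range _).isCompact_biUnion fun n _ ↦
    ((isCompact_stdSimplex ℝ (Fin n)).prod (isCompact_univ_pi fun _ ↦ hs)).image (by fun_prop)

end ConvexHull

section Dual

variable {V : Type*} [NormedAddCommGroup V] [NormedSpace 𝕜 V]

theorem convex_setOf_forall_norm_apply_le (p : V → ℝ) :
    Convex ℝ {φ : V →L[𝕜] 𝕜 | ∀ v, ‖φ v‖ ≤ p v} := by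
  simp only [Set.ofPred_forall]
  refine convex_iInter fun v ↦ ?_
  simpa [Set.preimage, mem_closedBall_zero_iff] using
    (convex_closedBall (0 : 𝕜) (p v)).is_linear_preimage
      (f := fun φ : V →L[𝕜] 𝕜 ↦ φ v) ⟨fun _ _ ↦ rfl, fun _ _ ↦ rfl⟩

variable [FiniteDimensional 𝕜 V]

theorem exists_forall_apply_eq_apply (F : (V →L[𝕜] 𝕜) →L[𝕜] 𝕜) :
    ∃ v : V, ∀ ψ : V →L[𝕜] 𝕜, F ψ = ψ v := by
  let F' : Module.Dual 𝕜 (Module.Dual 𝕜 V) := F.toLinearMap ∘ₗ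
    (LinearMap.toContinuousLinearMap : (V →ₗ[𝕜] 𝕜) ≃ₗ[𝕜] (V →L[𝕜] 𝕜)).toLinearMap
  exact ⟨(Module.evalEquiv 𝕜 V).symm F',
    fun ψ ↦ (Module.apply_evalEquiv_symm_apply 𝕜 V ψ.toLinearMap F').symm⟩

theorem mem_convexHull_of_forall_exists_re_apply_le {s : Set (V →L[𝕜] 𝕜)} (hs : IsCompact s)
    {φ : V →L[𝕜] 𝕜} (hφ : ∀ v, ∃ ψ ∈ s, RCLike.re (φ v) ≤ RCLike.re (ψ v)) :
    φ ∈ convexHull ℝ s := by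
  have : FiniteDimensional ℝ (V →L[𝕜] 𝕜) := FiniteDimensional.trans ℝ 𝕜 _
  rw [← RCLike.iInter_halfSpaces_eq (𝕜 := 𝕜) (convex_convexHull ℝ s)
    (isCompact_convexHull_of_finiteDimensional hs).isClosed]
  refine Set.mem_iInter.2 fun F ↦ ?_
  obtain ⟨v, hF⟩ := exists_forall_apply_eq_apply F
  obtain ⟨ψ, hψs, hψ⟩ := hφ v
  exact ⟨ψ, subset_convexHull ℝ s hψs, by simpa only [hF] using hψ⟩

end Dual

theorem exists_pos_forall_sub_lt_imp_lt {α : Type*} [TopologicalSpace α] {K : Set α}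
    (hK : IsCompact K) {f g : α → ℝ} (hf : Continuous f) (hg : Continuous g) {c m : ℝ}
    (h : ∀ x ∈ K, c ≤ g x → f x < m) : ∃ δ > 0, ∀ x ∈ K, c - δ < g x → f x < m := by
  have hK' : IsCompact (K ∩ {x | m ≤ f x}) :=
    hK.inter_right (isClosed_le continuous_const hf)
  rcases (K ∩ {x | m ≤ f x}).eq_empty_or_nonempty with hempty | hne
  · exact ⟨1, one_pos, fun x hx _ ↦ not_le.1 fun hmx ↦ hempty.subset ⟨hx, hmx⟩⟩
  · obtain ⟨a, ⟨haK, hma⟩, ha_max⟩ := hK'.exists_isMaxOn hne hg.continuousOn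
    have hgc : g a < c := not_le.1 fun hca ↦ (h a haK hca).not_ge hma
    refine ⟨c - g a, sub_pos.2 hgc, fun x hx hgx ↦ not_le.1 fun hmx ↦ ?_⟩
    have : g x ≤ g a := ha_max ⟨hx, hmx⟩
    linarith

section OperatorNorm

variable {X Y : Type*} [NormedAddCommGroup X] [NormedSpace 𝕜 X]
  [NormedAddCommGroup Y] [NormedSpace 𝕜 Y]

theorem exists_norm_eq_one_norm_apply_eq_opNorm [FiniteDimensional 𝕜 X] [Nontrivial X]
    (T : X →L[𝕜] Y) : ∃ x : X, ‖x‖ = 1 ∧ ‖T x‖ = ‖T‖ := by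
  have : ProperSpace X := FiniteDimensional.proper 𝕜 X
  have : NormedSpace ℝ X := NormedSpace.restrictScalars ℝ 𝕜 X
  obtain ⟨x, hx, hTx⟩ := (isCompact_sphere (0 : X) 1).exists_sSup_image_eq
    (NormedSpace.sphere_nonempty.2 zero_le_one) T.continuous.norm.continuousOn
  exact ⟨x, mem_sphere_zero_iff_norm.1 hx, hTx.symm.trans T.sSup_sphere_eq_norm⟩

/-- The unit vectors `x` with `‖G x‖ = 1`; when `‖G‖ = 1`, these are the points of the unit sphere
at which `G` attains its norm. -/
def normAttainingSphere (G : X →L[𝕜] Y) : Set X :=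
  Metric.sphere 0 1 ∩ {x | ‖G x‖ = 1}

theorem mem_normAttainingSphere {G : X →L[𝕜] Y} {x : X} :
    x ∈ normAttainingSphere G ↔ ‖x‖ = 1 ∧ ‖G x‖ = 1 := by
  rw [normAttainingSphere, Set.mem_inter_iff, mem_sphere_zero_iff_norm, Set.mem_ofPred_eq]

theorem isCompact_normAttainingSphere [FiniteDimensional 𝕜 X] (G : X →L[𝕜] Y) :
    IsCompact (normAttainingSphere G) := by
  have : ProperSpace X := FiniteDimensional.proper 𝕜 X
  exact (isCompact_sphere 0 1).inter_right (isClosed_eq G.continuous.norm continuous_const)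

theorem normAttainingSphere_nonempty [FiniteDimensional 𝕜 X] {G : X →L[𝕜] Y} (hG : ‖G‖ = 1) :
    (normAttainingSphere G).Nonempty := by
  have hG0 : G ≠ 0 := norm_ne_zero_iff.1 (hG ▸ one_ne_zero)
  obtain ⟨y, hy⟩ := DFunLike.ne_iff.1 hG0
  have : Nontrivial X := ⟨y, 0, fun h ↦ hy (by simp [h])⟩
  obtain ⟨x, hx, hGx⟩ := exists_norm_eq_one_norm_apply_eq_opNorm G
  exact ⟨x, mem_normAttainingSphere.2 ⟨hx, hGx.trans hG⟩⟩

theorem norm_apply_le_Gnorm {G : X →L[𝕜] Y} {x : X} (hx : x ∈ normAttainingSphere G)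
    (T : X →L[𝕜] Y) : ‖T x‖ ≤ Gnorm G T := by
  obtain ⟨hx, hGx⟩ := mem_normAttainingSphere.1 hx
  have : Nonempty {δ : ℝ // 0 < δ} := ⟨⟨1, one_pos⟩⟩
  refine le_ciInf fun δ ↦ le_csSup ⟨‖T‖, ?_⟩ ⟨x, hx, ?_, rfl⟩
  · rintro _ ⟨z, hz, -, rfl⟩
    exact T.unit_le_opNorm z hz.le
  · rw [hGx]
    exact sub_lt_self 1 δ.2

theorem Gnorm_le_of_forall_sub_lt {G T : X →L[𝕜] Y} {m δ : ℝ} (hδ : 0 < δ) (hm : 0 ≤ m)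
    (h : ∀ x, ‖x‖ = 1 → 1 - δ < ‖G x‖ → ‖T x‖ ≤ m) : Gnorm G T ≤ m := by
  refine ciInf_le_of_le ⟨0, ?_⟩ (⟨δ, hδ⟩ : {δ : ℝ // 0 < δ}) (Real.sSup_le ?_ hm)
  · rintro _ ⟨_, rfl⟩
    refine Real.sSup_nonneg ?_
    rintro _ ⟨x, -, -, rfl⟩
    exact norm_nonneg (T x)
  · rintro _ ⟨x, hx, hGx, rfl⟩
    exact h x hx hGx

theorem Gnorm_le_of_forall_mem_normAttainingSphere [FiniteDimensional 𝕜 X] {G T : X →L[𝕜] Y}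
    (hG : ‖G‖ ≤ 1) {m : ℝ} (hm : 0 ≤ m) (h : ∀ x ∈ normAttainingSphere G, ‖T x‖ ≤ m) :
    Gnorm G T ≤ m := by
  have : ProperSpace X := FiniteDimensional.proper 𝕜 X
  refine le_of_forall_pos_le_add fun ε hε ↦ ?_
  have lt_of_one_le : ∀ x ∈ Metric.sphere (0 : X) 1, 1 ≤ ‖G x‖ → ‖T x‖ < m + ε := by
    intro x hx hGx
    rw [mem_sphere_zero_iff_norm] at hx
    have hGx' : ‖G x‖ ≤ 1 := (G.unit_le_opNorm x hx.le).trans hG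
    exact lt_add_of_le_of_pos (h x (mem_normAttainingSphere.2 ⟨hx, hGx'.antisymm hGx⟩)) hε
  obtain ⟨δ, hδ, hlt⟩ := exists_pos_forall_sub_lt_imp_lt (isCompact_sphere (0 : X) 1)
    T.continuous.norm G.continuous.norm lt_of_one_le
  exact Gnorm_le_of_forall_sub_lt hδ (add_nonneg hm hε.le) fun x hx hGx ↦
    (hlt x (mem_sphere_zero_iff_norm.2 hx) hGx).le

theorem isGreatest_Gnorm [FiniteDimensional 𝕜 X] {G : X →L[𝕜] Y} (hG : ‖G‖ = 1)
    (T : X →L[𝕜] Y) :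
    IsGreatest ((fun x ↦ ‖T x‖) '' normAttainingSphere G) (Gnorm G T) := by
  obtain ⟨x, hx, hx_max⟩ := (isCompact_normAttainingSphere G).exists_isMaxOn
    (normAttainingSphere_nonempty hG) T.continuous.norm.continuousOn
  have hTx : ‖T x‖ = Gnorm G T := (norm_apply_le_Gnorm hx T).antisymm
    (Gnorm_le_of_forall_mem_normAttainingSphere hG.le (norm_nonneg _) hx_max)
  exact ⟨⟨x, hx, hTx⟩, Set.forall_mem_image.2 fun z hz ↦ norm_apply_le_Gnorm hz T⟩

/-- The functional `ψ_{x,f} = f ⊗ x : S ↦ f (S x)` on the space of operators. -/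
noncomputable def psi (x : X) (f : Y →L[𝕜] 𝕜) : (X →L[𝕜] Y) →L[𝕜] 𝕜 :=
  f ∘L ContinuousLinearMap.apply 𝕜 Y x

theorem psi_apply (x : X) (f : Y →L[𝕜] 𝕜) (S : X →L[𝕜] Y) : psi x f S = f (S x) :=
  rfl

theorem continuous_psi : Continuous fun p : X × (Y →L[𝕜] 𝕜) ↦ psi p.1 p.2 := by
  unfold psi
  fun_prop

theorem Ctilde_eq_image_psi (G : X →L[𝕜] Y) :
    Ctilde G = (fun p : X × (Y →L[𝕜] 𝕜) ↦ psi p.1 p.2) ''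
      (normAttainingSphere G ×ˢ Metric.sphere 0 1) := by
  ext ψ
  constructor
  · rintro ⟨x, f, hx, hf, hGx, hψ⟩
    exact ⟨(x, f), ⟨mem_normAttainingSphere.2 ⟨hx, hGx⟩, mem_sphere_zero_iff_norm.2 hf⟩,
      ContinuousLinearMap.ext fun S ↦ (hψ S).symm⟩
  · rintro ⟨⟨x, f⟩, ⟨hx, hf⟩, rfl⟩
    obtain ⟨hx, hGx⟩ := mem_normAttainingSphere.1 hx
    exact ⟨x, f, hx, mem_sphere_zero_iff_norm.1 hf, hGx, psi_apply x f⟩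

theorem isCompact_Ctilde [FiniteDimensional 𝕜 X] [FiniteDimensional 𝕜 Y] (G : X →L[𝕜] Y) :
    IsCompact (Ctilde G) := by
  have : ProperSpace (Y →L[𝕜] 𝕜) := FiniteDimensional.proper 𝕜 _
  rw [Ctilde_eq_image_psi]
  exact ((isCompact_normAttainingSphere G).prod (isCompact_sphere 0 1)).image continuous_psi

theorem norm_apply_le_Gnorm_of_mem_Ctilde {G : X →L[𝕜] Y} {ψ : (X →L[𝕜] Y) →L[𝕜] 𝕜}
    (hψ : ψ ∈ Ctilde G) (T : X →L[𝕜] Y) : ‖ψ T‖ ≤ Gnorm G T := by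
  obtain ⟨x, f, hx, hf, hGx, hψ⟩ := hψ
  calc ‖ψ T‖ = ‖f (T x)‖ := by rw [hψ]
    _ ≤ 1 * ‖T x‖ := f.le_of_opNorm_le hf.le (T x)
    _ = ‖T x‖ := one_mul _
    _ ≤ Gnorm G T := norm_apply_le_Gnorm (mem_normAttainingSphere.2 ⟨hx, hGx⟩) T

theorem exists_mem_Ctilde_apply_eq_Gnorm [FiniteDimensional 𝕜 X] {G : X →L[𝕜] Y} (hG : ‖G‖ = 1)
    (T : X →L[𝕜] Y) : ∃ ψ ∈ Ctilde G, ψ T = (Gnorm G T : 𝕜) := by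
  obtain ⟨x, hx, hTx⟩ := (isGreatest_Gnorm hG T).1
  obtain ⟨hx, hGx⟩ := mem_normAttainingSphere.1 hx
  have : Nontrivial Y := ⟨G x, 0, norm_ne_zero_iff.1 (hGx ▸ one_ne_zero)⟩
  obtain ⟨f, hf, hfTx⟩ := exists_dual_vector' 𝕜 (T x)
  exact ⟨psi x f, ⟨x, f, hx, hf, hGx, psi_apply x f⟩, by rw [psi_apply, hfTx, ← hTx]⟩

theorem stmt_14_general [FiniteDimensional 𝕜 X] [FiniteDimensional 𝕜 Y] (G : X →L[𝕜] Y)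
    (hG : ‖G‖ = 1) :
    {φ : (X →L[𝕜] Y) →L[𝕜] 𝕜 | ∀ T : X →L[𝕜] Y, ‖φ T‖ ≤ Gnorm G T}
      = convexHull ℝ (Ctilde G) := by
  refine Set.Subset.antisymm (fun φ hφ ↦ ?_) ?_
  · refine mem_convexHull_of_forall_exists_re_apply_le (isCompact_Ctilde G) fun T ↦ ?_
    obtain ⟨ψ, hψ, hψT⟩ := exists_mem_Ctilde_apply_eq_Gnorm hG T
    refine ⟨ψ, hψ, ?_⟩
    calc RCLike.re (φ T) ≤ ‖φ T‖ := RCLike.re_le_norm _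
      _ ≤ Gnorm G T := hφ T
      _ = RCLike.re (ψ T) := by rw [hψT, RCLike.ofReal_re]
  · exact convexHull_min (fun _ ↦ norm_apply_le_Gnorm_of_mem_Ctilde)
      (convex_setOf_forall_norm_apply_le (Gnorm G))

end OperatorNorm

/-- For finite-dimensional `X, Y` and norm-one `G ∈ L(X,Y)`, the unit ball of the dual of
`(L(X,Y), ‖·‖_G)` equals the convex hull of `C̃`. -/
theorem stmt_14 {X Y : Type*}
    [NormedAddCommGroup X] [NormedSpace 𝕜 X] [FiniteDimensional 𝕜 X]
    [NormedAddCommGroup Y] [NormedSpace 𝕜 Y] [FiniteDimensional 𝕜 Y]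
    (G : X →L[𝕜] Y) (hG : ‖G‖ = 1)
    (hGnorm : ∀ T : X →L[𝕜] Y, Gnorm G T = 0 → T = 0) :
    {φ : (X →L[𝕜] Y) →L[𝕜] 𝕜 | ∀ T : X →L[𝕜] Y, ‖φ T‖ ≤ Gnorm G T}
      = convexHull ℝ (Ctilde G) :=
  stmt_14_general G hG
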